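/- Let M and N be metric trees, let T : M → N be a continuous map, and let k ≥ 0. Then T is k-set-contractive if and only if T is k-ball-contractive. -/

import Mathlib

/-- `S` is a metric segment from `x` to `y` in a metric space: `S` contains `x` and `y`, and
the map `z ↦ dist x z` is an isometry from `S` onto the real interval `[0, dist x y]`. -/
def IsMetricSegment {X : Type*} [MetricSpace X] (S : Set X) (x y : X) : Prop :=
  x ∈ S ∧ y ∈ S ∧
    (∀ z ∈ S, ∀ w ∈ S, |dist x z - dist x w| = dist z w) ∧
    (fun z => dist x z) '' S = Set.Icc 0 (dist x y)

/-- A metric tree structure on a metric space `M`: every pair of points is joined by a unique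
metric segment `seg x y`, and if `[x,z] ∩ [z,y] = {z}` then `[x,z] ∪ [z,y] = [x,y]`. -/
structure MetricTree (M : Type*) [MetricSpace M] where
  seg : M → M → Set M
  seg_isSegment : ∀ x y : M, IsMetricSegment (seg x y) x y
  seg_unique : ∀ x y : M, ∀ S : Set M, IsMetricSegment S x y → S = seg x y
  seg_glue : ∀ x y z : M, seg x z ∩ seg z y = {z} → seg x z ∪ seg z y = seg x y

/-- The set (Kuratowski) measure of noncompactness of `A`: the infimum of all `b > 0` such that
`A` admits a finite cover by subsets of `A` of diameter at most `b`. -/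
noncomputable def setMNC {X : Type*} [MetricSpace X] (A : Set X) : ℝ :=
  sInf {b : ℝ | 0 < b ∧ ∃ (n : ℕ) (E : Fin n → Set X),
    (∀ j, E j ⊆ A) ∧ (∀ j, Metric.diam (E j) ≤ b) ∧ A ⊆ ⋃ j, E j}

/-- The ball (Hausdorff) measure of noncompactness of `A`: the infimum of all `b > 0` such that
`A` admits a finite cover by open balls of radius `b` centered in the ambient space. -/
noncomputable def ballMNC {X : Type*} [MetricSpace X] (A : Set X) : ℝ :=
  sInf {b : ℝ | 0 < b ∧ ∃ (n : ℕ) (c : Fin n → X), A ⊆ ⋃ j, Metric.ball (c j) b}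

/-- The diameter-based ball measure of noncompactness of `A`: the infimum of all `b > 0` such
that `A` admits a finite cover by open balls each of diameter at most `b`. -/
noncomputable def ballDiamMNC {X : Type*} [MetricSpace X] (A : Set X) : ℝ :=
  sInf {b : ℝ | 0 < b ∧ ∃ (n : ℕ) (c : Fin n → X) (r : Fin n → ℝ),
    (∀ j, Metric.diam (Metric.ball (c j) (r j)) ≤ b) ∧ A ⊆ ⋃ j, Metric.ball (c j) (r j)}

/-- `b > 0` is Lifschitz for `X` iff there is `a > 1` such that whenever `dist x y > r > 0`,
some closed ball of radius `r` contains `closedBall x (a*r) ∩ closedBall y (b*r)`. -/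
def IsLifschitz (X : Type*) [MetricSpace X] (b : ℝ) : Prop :=
  0 < b ∧ ∃ a : ℝ, 1 < a ∧ ∀ x y : X, ∀ r : ℝ, 0 < r → r < dist x y →
    ∃ z : X, Metric.closedBall x (a * r) ∩ Metric.closedBall y (b * r) ⊆ Metric.closedBall z r

/-- The Lifschitz characteristic of `X`: the supremum of all `b` Lifschitz for `X`. -/
noncomputable def lifschitzChar (X : Type*) [MetricSpace X] : ℝ :=
  sSup {b : ℝ | IsLifschitz X b}

/-!
In any metric space `setMNC A ≤ 2 * ballMNC A` for bounded `A`, since a ball of radius `b` has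
diameter at most `2 * b`. In a metric tree equality holds, because every bounded set `E` lies in
balls of radius arbitrarily close to half its diameter: let `c` be the midpoint of two points
`x, y ∈ E` that almost realize `diam E`. Any `z` is joined to the points of `[x, y]` through its
nearest point `p ∈ [x, y]`, so its path to the endpoint on the other side of `c` passes through `c`,
and `dist z c + dist x y / 2 ≤ diam E` for `z ∈ E`. Hence both sides of the two contractivity
inequalities differ by the same factor `2`.
-/

namespace IsMetricSegment

variable {X : Type*} [MetricSpace X] {S : Set X} {x y p : X}

theorem dist_le (h : IsMetricSegment S x y) (hp : p ∈ S) : dist x p ≤ dist x y := by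
  have hmem : dist x p ∈ Set.Icc 0 (dist x y) := h.2.2.2 ▸ Set.mem_image_of_mem _ hp
  exact hmem.2

theorem dist_add_dist (h : IsMetricSegment S x y) (hp : p ∈ S) :
    dist x p + dist p y = dist x y := by
  have hpy : |dist x p - dist x y| = dist p y := h.2.2.1 p hp y h.2.1
  rw [abs_of_nonpos (sub_nonpos.2 (h.dist_le hp))] at hpy
  linarith

theorem exists_dist_eq (h : IsMetricSegment S x y) {t : ℝ} (ht : t ∈ Set.Icc 0 (dist x y)) :
    ∃ c ∈ S, dist x c = t :=
  h.2.2.2.symm.subset ht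

theorem isCompact (h : IsMetricSegment S x y) : IsCompact S := by
  have hiso : Isometry fun z : S => dist x z :=
    Isometry.of_dist_eq fun z w => h.2.2.1 z z.2 w w.2
  have himage : (fun z : S => dist x z) '' Set.univ = Set.Icc 0 (dist x y) := by
    rw [← h.2.2.2, Set.image_univ, Set.image_eq_range]
  rw [isCompact_iff_isCompact_univ, hiso.isEmbedding.isInducing.isCompact_iff, himage]
  exact isCompact_Icc

theorem symm (h : IsMetricSegment S x y) : IsMetricSegment S y x := by
  have hdist : ∀ z ∈ S, dist y z = dist x y - dist x z := fun z hz => by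
    rw [dist_comm y z, ← h.dist_add_dist hz, add_sub_cancel_left]
  refine ⟨h.2.1, h.1, fun z hz w hw => ?_, ?_⟩
  · rw [hdist z hz, hdist w hw, sub_sub_sub_cancel_left, abs_sub_comm, h.2.2.1 z hz w hw]
  · calc (fun z => dist y z) '' S
        = (fun t => dist x y - t) '' ((fun z => dist x z) '' S) := by
          rw [Set.image_image]
          exact Set.image_congr hdist
      _ = Set.Icc 0 (dist y x) := by
          rw [h.2.2.2, Set.image_const_sub_Icc, sub_self, sub_zero, dist_comm]

theorem sep_dist_le (h : IsMetricSegment S x y) (hp : p ∈ S) :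
    IsMetricSegment {w ∈ S | dist x w ≤ dist x p} x p := by
  refine ⟨⟨h.1, (dist_self x).trans_le dist_nonneg⟩, ⟨hp, le_rfl⟩,
    fun z hz w hw => h.2.2.1 z hz.1 w hw.1, Set.Subset.antisymm ?_ fun t ht => ?_⟩
  · rintro _ ⟨w, ⟨-, hw⟩, rfl⟩
    exact ⟨dist_nonneg, hw⟩
  · obtain ⟨w, hw, rfl⟩ := h.exists_dist_eq ⟨ht.1, ht.2.trans (h.dist_le hp)⟩
    exact ⟨w, ⟨hw, ht.2⟩, rfl⟩

end IsMetricSegment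

/-- A space is centrable if the Chebyshev radius of every nonempty bounded set is half its diameter.
The radius need not be attained, so the condition asks for a ball of every larger radius. -/
def IsCentrable (X : Type*) [PseudoMetricSpace X] : Prop :=
  ∀ E : Set X, Bornology.IsBounded E → E.Nonempty → ∀ r : ℝ, Metric.diam E < 2 * r →
    ∃ c, E ⊆ Metric.ball c r

namespace MetricTree

variable {M : Type*} [MetricSpace M]

theorem seg_comm (TM : MetricTree M) (x y : M) : TM.seg x y = TM.seg y x :=
  TM.seg_unique y x _ (TM.seg_isSegment x y).symm

theorem seg_left_eq (TM : MetricTree M) {x y p : M} (hp : p ∈ TM.seg x y) :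
    TM.seg x p = {w ∈ TM.seg x y | dist x w ≤ dist x p} :=
  (TM.seg_unique x p _ ((TM.seg_isSegment x y).sep_dist_le hp)).symm

theorem seg_subset_seg (TM : MetricTree M) {x y p q : M} (hp : p ∈ TM.seg x y)
    (hq : q ∈ TM.seg x y) :
    TM.seg p q ⊆ TM.seg x y := by
  wlog hpq : dist x p ≤ dist x q generalizing p q
  · rw [TM.seg_comm]
    exact this hq hp (le_of_not_ge hpq)
  have hpxq : p ∈ TM.seg q x := by
    rw [TM.seg_comm, TM.seg_left_eq hq]
    exact ⟨hp, hpq⟩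
  calc TM.seg p q
      = TM.seg q p := TM.seg_comm p q
    _ ⊆ TM.seg q x := (TM.seg_left_eq hpxq).trans_subset (Set.sep_subset _ _)
    _ = TM.seg x q := TM.seg_comm q x
    _ ⊆ TM.seg x y := (TM.seg_left_eq hq).trans_subset (Set.sep_subset _ _)

theorem dist_eq_add_of_seg_inter_seg (TM : MetricTree M) {x y z : M}
    (h : TM.seg x z ∩ TM.seg z y = {z}) :
    dist x y = dist x z + dist z y := by
  have hz : z ∈ TM.seg x y := TM.seg_glue x y z h ▸ Or.inl (TM.seg_isSegment x z).2.1
  exact ((TM.seg_isSegment x y).dist_add_dist hz).symm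

theorem exists_gate_mem_seg (TM : MetricTree M) (x y z : M) :
    ∃ p ∈ TM.seg x y, ∀ w ∈ TM.seg x y, dist z w = dist z p + dist p w := by
  have hseg := TM.seg_isSegment x y
  obtain ⟨p, hp, hnearest⟩ := hseg.isCompact.exists_isMinOn ⟨x, hseg.1⟩
    (continuous_const.dist continuous_id : Continuous (dist z)).continuousOn
  refine ⟨p, hp, fun w hw => TM.dist_eq_add_of_seg_inter_seg (Set.Subset.antisymm ?_ ?_)⟩
  · rintro v ⟨hzp, hpw⟩
    have hle : dist z p ≤ dist z v := hnearest (TM.seg_subset_seg hp hw hpw)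
    have hadd := (TM.seg_isSegment z p).dist_add_dist hzp
    exact dist_le_zero.1 (by linarith)
  · rintro _ rfl
    exact ⟨(TM.seg_isSegment z _).2.1, (TM.seg_isSegment _ w).1⟩

theorem exists_dist_add_half_dist_le_max (TM : MetricTree M) (x y : M) :
    ∃ c, ∀ z, dist z c + dist x y / 2 ≤ max (dist z x) (dist z y) := by
  have hseg := TM.seg_isSegment x y
  have hnonneg : 0 ≤ dist x y := dist_nonneg
  obtain ⟨c, hc, hxc⟩ := hseg.exists_dist_eq (t := dist x y / 2) ⟨by linarith, by linarith⟩
  refine ⟨c, fun z => ?_⟩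
  obtain ⟨p, hp, hgate⟩ := TM.exists_gate_mem_seg x y z
  have hzc := hgate c hc
  have hpc : |dist x p - dist x c| = dist p c := hseg.2.2.1 p hp c hc
  rcases le_total (dist x p) (dist x c) with hle | hle
  · have hzy := hgate y hseg.2.1
    have hpy := hseg.dist_add_dist hp
    rw [abs_of_nonpos (sub_nonpos.2 hle)] at hpc
    exact le_max_of_le_right (by linarith)
  · have hzx := hgate x hseg.1
    rw [abs_of_nonneg (sub_nonneg.2 hle)] at hpc
    rw [dist_comm p x] at hzx
    exact le_max_of_le_left (by linarith)

theorem isCentrable (TM : MetricTree M) : IsCentrable M := by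
  intro E hE hne r hr
  obtain ⟨x, hx, y, hy, hxy⟩ : ∃ x ∈ E, ∃ y ∈ E, 2 * Metric.diam E - 2 * r < dist x y := by
    by_contra! hsmall
    linarith [Metric.diam_le_of_forall_dist_le_of_nonempty hne hsmall]
  obtain ⟨c, hc⟩ := TM.exists_dist_add_half_dist_le_max x y
  refine ⟨c, fun z hz => ?_⟩
  have hmax : max (dist z x) (dist z y) ≤ Metric.diam E :=
    max_le (Metric.dist_le_diam_of_mem hE hz hx) (Metric.dist_le_diam_of_mem hE hz hy)
  rw [Metric.mem_ball]
  linarith [hc z]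

end MetricTree

section MeasureOfNoncompactness

variable {X : Type*} [MetricSpace X] {A : Set X}

theorem setMNC_le {b : ℝ} (hb : 0 < b) {n : ℕ} {E : Fin n → Set X} (hEA : ∀ j, E j ⊆ A)
    (hdiam : ∀ j, Metric.diam (E j) ≤ b) (hcover : A ⊆ ⋃ j, E j) : setMNC A ≤ b :=
  csInf_le ⟨0, fun _ h => h.1.le⟩ ⟨hb, n, E, hEA, hdiam, hcover⟩

theorem ballMNC_le {b : ℝ} (hb : 0 < b) {n : ℕ} {c : Fin n → X}
    (hcover : A ⊆ ⋃ j, Metric.ball (c j) b) : ballMNC A ≤ b :=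
  csInf_le ⟨0, fun _ h => h.1.le⟩ ⟨hb, n, c, hcover⟩

theorem exists_fin_ball_cover_of_isBounded {X : Type*} [PseudoMetricSpace X] {A : Set X}
    (hA : Bornology.IsBounded A) :
    ∃ b : ℝ, 0 < b ∧ ∃ (n : ℕ) (c : Fin n → X), A ⊆ ⋃ j, Metric.ball (c j) b := by
  rcases A.eq_empty_or_nonempty with rfl | ⟨a, -⟩
  · exact ⟨1, one_pos, 0, Fin.elim0, Set.empty_subset _⟩
  · obtain ⟨b, hb, hAb⟩ := hA.subset_ball_lt 0 a
    exact ⟨b, hb, 1, fun _ => a, hAb.trans (Set.subset_iUnion_of_subset 0 subset_rfl)⟩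

theorem setMNC_le_two_mul_ballMNC (hA : Bornology.IsBounded A) : setMNC A ≤ 2 * ballMNC A := by
  suffices setMNC A / 2 ≤ ballMNC A by linarith
  refine le_csInf (exists_fin_ball_cover_of_isBounded hA) ?_
  rintro b ⟨hb, n, c, hcover⟩
  have hdiam : ∀ j, Metric.diam (A ∩ Metric.ball (c j) b) ≤ 2 * b := fun j =>
    (Metric.diam_mono Set.inter_subset_right Metric.isBounded_ball).trans (Metric.diam_ball hb.le)
  have hcover_inter : A ⊆ ⋃ j, A ∩ Metric.ball (c j) b := by
    rw [← Set.inter_iUnion]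
    exact Set.subset_inter subset_rfl hcover
  linarith [setMNC_le (by linarith) (fun _ => Set.inter_subset_left) hdiam hcover_inter]

theorem IsCentrable.two_mul_ballMNC_le_setMNC (hX : IsCentrable X) (hA : Bornology.IsBounded A) :
    2 * ballMNC A ≤ setMNC A := by
  refine le_csInf ⟨Metric.diam A + 1, by positivity, 1, fun _ => A, fun _ => subset_rfl,
    fun _ => by linarith, Set.subset_iUnion_of_subset 0 subset_rfl⟩ ?_
  rintro b ⟨hb, n, E, hEA, hdiam, hcover⟩
  suffices ballMNC A ≤ b / 2 by linarith
  refine le_of_forall_gt_imp_ge_of_dense fun r hr => ?_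
  rcases A.eq_empty_or_nonempty with rfl | ⟨a, -⟩
  · exact ballMNC_le (n := 0) (c := Fin.elim0) (by linarith) (Set.empty_subset _)
  have hball : ∀ j, ∃ c, E j ⊆ Metric.ball c r := fun j => by
    rcases (E j).eq_empty_or_nonempty with hempty | hne
    · exact ⟨a, hempty ▸ Set.empty_subset _⟩
    · exact hX (E j) (hA.subset (hEA j)) hne r (by linarith [hdiam j])
  choose c hc using hball
  exact ballMNC_le (by linarith) (hcover.trans (Set.iUnion_mono hc))

theorem setMNC_of_not_isBounded (hA : ¬Bornology.IsBounded A) : setMNC A = 0 := by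
  refine le_antisymm (le_of_forall_gt_imp_ge_of_dense fun b hb => ?_)
    (Real.sInf_nonneg fun _ h => h.1.le)
  -- `A` covers itself, since the real-valued diameter of an unbounded set is `0`.
  exact setMNC_le (n := 1) (E := fun _ => A) hb (fun _ => subset_rfl)
    (fun _ => (Metric.diam_eq_zero_of_unbounded hA).trans_le hb.le)
    (Set.subset_iUnion_of_subset 0 subset_rfl)

theorem ballMNC_of_not_isBounded (hA : ¬Bornology.IsBounded A) : ballMNC A = 0 := by
  -- No finite union of balls contains `A`, and `sInf ∅ = 0`.
  refine (congrArg sInf (Set.eq_empty_of_forall_notMem ?_)).trans Real.sInf_empty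
  rintro b ⟨-, n, c, hcover⟩
  exact hA ((Bornology.isBounded_iUnion.2 fun _ => Metric.isBounded_ball).subset hcover)

theorem IsCentrable.setMNC_eq_two_mul_ballMNC (hX : IsCentrable X) (A : Set X) :
    setMNC A = 2 * ballMNC A := by
  by_cases hA : Bornology.IsBounded A
  · exact (setMNC_le_two_mul_ballMNC hA).antisymm (hX.two_mul_ballMNC_le_setMNC hA)
  · rw [setMNC_of_not_isBounded hA, ballMNC_of_not_isBounded hA, mul_zero]

end MeasureOfNoncompactness

theorem stmt_4_general {X Y : Type*} [MetricSpace X] [MetricSpace Y]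
    (hX : IsCentrable X) (hY : IsCentrable Y) (T : X → Y) (k : ℝ) :
    (∀ A : Set X, Bornology.IsBounded A → setMNC (T '' A) ≤ k * setMNC A) ↔
    (∀ A : Set X, Bornology.IsBounded A → ballMNC (T '' A) ≤ k * ballMNC A) :=
  forall₂_congr fun A _ => by
    rw [hX.setMNC_eq_two_mul_ballMNC, hY.setMNC_eq_two_mul_ballMNC, mul_left_comm,
      mul_le_mul_iff_right₀ two_pos]

theorem stmt_4 {M N : Type*} [MetricSpace M] [MetricSpace N]
    (TM : MetricTree M) (TN : MetricTree N)
    (T : M → N) (hT : Continuous T) (k : ℝ) (hk : 0 ≤ k) :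
    (∀ A : Set M, Bornology.IsBounded A → setMNC (T '' A) ≤ k * setMNC A) ↔
    (∀ A : Set M, Bornology.IsBounded A → ballMNC (T '' A) ≤ k * ballMNC A) :=
  stmt_4_general TM.isCentrable TN.isCentrable T k
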